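/- arXiv:1701.06082 — 2 statements merged into one kernel-verified Lean document; each statement's English description precedes it below -/
import Mathlib

section
/- Let R be a commutative ring with identity, M a unitary R-module, and S a multiplicative closed set in R such that S(K) ∩ S = ∅ for every submodule K of M. Then a submodule N of M is a maximal submodule of M if and only if N_S is a maximal submodule of M_S. -/
/-- `S(K)` for a submodule `K` of an `R`-module `M`: the set of elements of `R` not prime
to `K`, i.e. `{r : R | r • m ∈ K for some m ∈ M with m ∉ K}`. -/
def notPrimeTo {R : Type*} [CommRing R] {M : Type*} [AddCommGroup M] [Module R M]
    (K : Submodule R M) : Set R :=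
  {r : R | ∃ m : M, m ∉ K ∧ r • m ∈ K}

/-!
Extension `K ↦ K_S` and contraction along `M → M_S` form a Galois insertion. The condition
`S(K) ∩ S = ∅` says precisely that `K` is the contraction of its own extension, so when it holds
for every `K ≥ N`, the submodules above `N` correspond to the submodules above `N_S`.
-/

theorem isCoatom_l_iff_of_forall_u_l_eq {α β : Type*} [PartialOrder α] [PartialOrder β]
    [OrderTop α] [OrderTop β] {l : α → β} {u : β → α} (gi : GaloisInsertion l u) {a : α}
    (closed_above : ∀ b, a ≤ b → u (l b) = b) : IsCoatom (l a) ↔ IsCoatom a := by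
  refine ⟨fun hla ↦ ⟨?_, fun b hab ↦ ?_⟩, fun ha ↦ ?_⟩
  · rintro rfl
    exact hla.1 gi.l_top
  · have hlab : l a < l b := by
      refine (gi.gc.monotone_l hab.le).lt_of_ne fun heq ↦ hab.ne ?_
      rw [← closed_above a le_rfl, heq, closed_above b hab.le]
    rw [← closed_above b hab.le, hla.2 _ hlab, gi.gc.u_top]
  · exact gi.isCoatom_of_image ((closed_above a le_rfl).symm ▸ ha)

section Contraction

variable {R M M' : Type*} (A : Type*) [CommSemiring R] [CommSemiring A] [Algebra R A]
  [AddCommMonoid M] [Module R M] [AddCommMonoid M'] [Module R M'] [Module A M']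
  [IsScalarTower R A M'] (S : Submonoid R) [IsLocalization S A]
  (f : M →ₗ[R] M') [IsLocalizedModule S f]

theorem map_mem_localized'_iff {K : Submodule R M} {x : M} :
    f x ∈ K.localized' A S f ↔ ∃ s ∈ S, s • x ∈ K := by
  simp only [Submodule.mem_localized', IsLocalizedModule.mk'_eq_iff,
    ← LinearMap.map_smul_of_tower, IsLocalizedModule.eq_iff_exists S f]
  constructor
  · rintro ⟨m, hm, s, c, hc⟩
    refine ⟨c * s, (c * s).2, ?_⟩
    have hcs : ((c : R) * s) • x = c • m := by rw [hc, mul_smul]; rfl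
    rw [hcs]
    exact K.smul_mem c hm
  · rintro ⟨s, hs, hsx⟩
    exact ⟨s • x, hsx, ⟨s, hs⟩, 1, rfl⟩

end Contraction

section Maximal

variable {R M M' : Type*} (A : Type*) [CommRing R] [CommSemiring A] [Algebra R A]
  [AddCommGroup M] [Module R M] [AddCommMonoid M'] [Module R M'] [Module A M']
  [IsScalarTower R A M'] (S : Submonoid R) [IsLocalization S A]
  (f : M →ₗ[R] M') [IsLocalizedModule S f]

theorem comap_localized'_eq_self_iff {K : Submodule R M} :
    ((K.localized' A S f).restrictScalars R).comap f = K ↔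
      notPrimeTo K ∩ (S : Set R) = ∅ := by
  have le_comap : K ≤ ((K.localized' A S f).restrictScalars R).comap f :=
    (Submodule.localized'gi A S f).gc.le_u_l K
  rw [← le_comap.ge_iff_eq', Set.eq_empty_iff_forall_notMem]
  constructor
  · rintro comap_le r ⟨⟨x, hxK, hrx⟩, hrS⟩
    exact hxK (comap_le ((map_mem_localized'_iff A S f).2 ⟨r, hrS, hrx⟩))
  · intro hS x hx
    obtain ⟨s, hs, hsx⟩ := (map_mem_localized'_iff A S f).1 hx
    by_contra hxK
    exact hS s ⟨⟨x, hxK, hsx⟩, hs⟩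

theorem isCoatom_iff_localized_general {N : Submodule R M}
    (hS : ∀ K : Submodule R M, N ≤ K → notPrimeTo K ∩ (S : Set R) = ∅) :
    IsCoatom N ↔ IsCoatom (N.localized' A S f) :=
  (isCoatom_l_iff_of_forall_u_l_eq (Submodule.localized'gi A S f) fun K hNK ↦
    (comap_localized'_eq_self_iff A S f).2 (hS K hNK)).symm

end Maximal

/-- Lemma 3.21: let `S` be a multiplicative closed set in `R` with `S(K) ∩ S = ∅` for every
submodule `K` of `M`.  Then a submodule `N` of `M` is a maximal submodule of `M` iff
`N_S = N.localized S` is a maximal submodule of `M_S`.  (Maximal submodules are exactly the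
coatoms of the submodule lattice.) -/
theorem isCoatom_iff_localized {R : Type*} [CommRing R] {M : Type*} [AddCommGroup M]
    [Module R M] (S : Submonoid R)
    (hS : ∀ K : Submodule R M, notPrimeTo K ∩ (S : Set R) = ∅) (N : Submodule R M) :
    IsCoatom N ↔ IsCoatom (N.localized S) :=
  isCoatom_iff_localized_general (Localization S) S (LocalizedModule.mkLinearMap S M)
    fun K _ ↦ hS K
end

section
/- Let R be a commutative ring with identity, M a unitary R-module, and S a multiplicative closed set in R such that S(K) ∩ S = ∅ for every submodule K of M. Then for every submodule N of M, Rad(N_S) = (Rad N)_S, where Rad denotes the intersection of all maximal submodules. -/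
/-- `Rad N` for a submodule `N` of `M`: the intersection of all maximal submodules of the
module `N`.  A maximal submodule of `N` is a submodule `L` of `M` with `L < N` such that no
submodule of `M` lies strictly between `L` and `N`.  (The intersection with `N` realises the
convention that the empty intersection of submodules of `N` is `N` itself.) -/
def radSubmodule {R : Type*} [CommRing R] {M : Type*} [AddCommGroup M] [Module R M]
    (N : Submodule R M) : Submodule R M :=
  N ⊓ sInf {L : Submodule R M | L < N ∧ ∀ K : Submodule R M, L < K → K ≤ N → K = N}

/-! The hypothesis makes every submodule `K` of `N` `S`-saturated in `N`: `s • x ∈ K` forces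
`x ∈ K`. Hence `K ↦ K_S`, which always maps the submodules of `N` onto those of `N_S`, is an
isomorphism of lattices, and the radical, being the infimum of the coatoms, is preserved by it. -/

section Localization

variable {R R' M M' : Type*} [CommSemiring R] [CommSemiring R'] [Algebra R R']
  [AddCommMonoid M] [Module R M] [AddCommMonoid M'] [Module R M'] [Module R' M']
  [IsScalarTower R R' M'] (S : Submonoid R) [IsLocalization S R'] (f : M →ₗ[R] M')
  [IsLocalizedModule S f]

theorem apply_mem_localized'_iff {K : Submodule R M} {x : M} :
    f x ∈ K.localized' R' S f ↔ ∃ s : S, s • x ∈ K := by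
  rw [Submodule.mem_localized']
  constructor
  · rintro ⟨m, hm, s, hms⟩
    have hfm : f m = f (s • x) := by
      rw [IsLocalizedModule.mk'_eq_iff.mp hms, Submonoid.smul_def, Submonoid.smul_def, map_smul]
    obtain ⟨t, ht⟩ := IsLocalizedModule.exists_of_eq (S := S) hfm
    exact ⟨t * s, by rw [mul_smul, ← ht]; exact K.smul_of_tower_mem t hm⟩
  · rintro ⟨s, hs⟩
    exact ⟨s • x, hs, s, IsLocalizedModule.mk'_cancel f x s⟩

theorem exists_localized'_eq_of_le {N : Submodule R M} {P : Submodule R' M'}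
    (hP : P ≤ N.localized' R' S f) : ∃ K ≤ N, K.localized' R' S f = P :=
  ⟨(P.restrictScalars R).comap f ⊓ N, inf_le_right, by
    rw [Submodule.localized'_inf, (Submodule.localized'gi R' S f).l_u_eq, inf_eq_left.mpr hP]⟩

end Localization

section Saturated

variable {R M : Type*} [CommRing R] [AddCommGroup M] [Module R M]

theorem notPrimeTo_subset_notPrimeTo_map_subtype {N : Submodule R M} (K : Submodule R N) :
    notPrimeTo K ⊆ notPrimeTo (K.map N.subtype) := by
  rintro r ⟨x, hx, hrx⟩
  refine ⟨x, fun hxK ↦ hx ?_, r • x, hrx, rfl⟩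
  exact N.subtype_injective.mem_set_image.mp hxK

theorem mem_of_smul_mem_of_notPrimeTo_inter_eq_empty {K : Submodule R M} {S : Submonoid R}
    (hK : notPrimeTo K ∩ (S : Set R) = ∅) (s : S) {x : M} (hsx : s • x ∈ K) : x ∈ K := by
  by_contra hx
  exact Set.eq_empty_iff_forall_notMem.mp hK s ⟨⟨x, hx, hsx⟩, s.2⟩

variable {M' : Type*} (R' : Type*) [CommRing R'] [Algebra R R'] [AddCommGroup M'] [Module R M']
  [Module R' M'] [IsScalarTower R R' M'] (S : Submonoid R) [IsLocalization S R']
  (f : M →ₗ[R] M') [IsLocalizedModule S f]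

theorem localized'_le_localized'_iff {N K L : Submodule R M} (hK : K ≤ N)
    (hL : notPrimeTo (L.submoduleOf N) ∩ (S : Set R) = ∅) :
    K.localized' R' S f ≤ L.localized' R' S f ↔ K ≤ L := by
  refine ⟨fun h x hx ↦ ?_, fun h ↦ (Submodule.localized'gi R' S f).gc.monotone_l h⟩
  have hfx : f x ∈ L.localized' R' S f := (Submodule.localized'gi R' S f).gc.le_u h hx
  obtain ⟨s, hs⟩ := (apply_mem_localized'_iff S f).mp hfx
  exact mem_of_smul_mem_of_notPrimeTo_inter_eq_empty hL s (x := ⟨x, hK hx⟩) hs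

/-- Localization `K ↦ K_S` as an isomorphism from the lattice of submodules of `N` to that of
submodules of `N_S`, when all submodules of `N` are `S`-saturated in `N`. The submodules of `N` are
encoded as the submodules of `M` contained in `N`. -/
noncomputable def localizedIicOrderIso (N : Submodule R M)
    (hS : ∀ K : Submodule R N, notPrimeTo K ∩ (S : Set R) = ∅) :
    Set.Iic N ≃o Set.Iic (N.localized' R' S f) :=
  RelIso.ofSurjective
    (OrderEmbedding.ofMapLEIff
      (fun K ↦ ⟨K.1.localized' R' S f, (Submodule.localized'gi R' S f).gc.monotone_l K.2⟩)
      fun K L ↦ localized'_le_localized'_iff R' S f K.2 (hS (L.1.submoduleOf N)))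
    fun P ↦
      let ⟨K, hKN, hKP⟩ := exists_localized'_eq_of_le S f P.2
      ⟨⟨K, hKN⟩, Subtype.ext hKP⟩

theorem coe_localizedIicOrderIso (N : Submodule R M)
    (hS : ∀ K : Submodule R N, notPrimeTo K ∩ (S : Set R) = ∅) (K : Set.Iic N) :
    (localizedIicOrderIso R' S f N hS K : Submodule R' M') = K.1.localized' R' S f :=
  rfl

theorem radSubmodule_eq_coe_radical (N : Submodule R M) :
    radSubmodule N = (Order.radical (Set.Iic N) : Submodule R M) := by
  have maximal_iff_covBy (L : Submodule R M) :
      (L < N ∧ ∀ K : Submodule R M, L < K → K ≤ N → K = N) ↔ L ⋖ N :=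
    and_congr_right fun _ ↦ forall₂_congr fun _ _ ↦ by
      rw [not_lt_iff_le_imp_ge]
      exact forall_congr' fun hKN ↦ hKN.ge_iff_eq.symm
  have image_coatoms : ((↑) '' {L : Set.Iic N | IsCoatom L} : Set (Submodule R M)) =
      {L | L ⋖ N} := by
    ext L
    simp only [Set.Iic.isCoatom_iff, Set.mem_image, Set.mem_ofPred_eq]
    exact ⟨fun ⟨_, hL, hLL⟩ ↦ hLL ▸ hL, fun hL ↦ ⟨⟨L, hL.le⟩, hL, rfl⟩⟩
  simp only [radSubmodule, Order.radical, maximal_iff_covBy, ← sInf_eq_iInf, Set.Iic.coe_sInf,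
    image_coatoms]

theorem rad_localized_general (N : Submodule R M)
    (hS : ∀ K : Submodule R N, notPrimeTo K ∩ (S : Set R) = ∅) :
    radSubmodule (N.localized' R' S f) = (radSubmodule N).localized' R' S f := by
  rw [radSubmodule_eq_coe_radical, radSubmodule_eq_coe_radical,
    ← (localizedIicOrderIso R' S f N hS).map_radical, coe_localizedIicOrderIso]

end Saturated

/-- Lemma 3.22 (1): let `S` be a multiplicative closed set in `R` with `S(K) ∩ S = ∅` for
every submodule `K` of `M`.  Then `Rad (N_S) = (Rad N)_S` for every submodule `N` of `M`,
where `N_S = N.localized S`. -/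
theorem rad_localized {R : Type*} [CommRing R] {M : Type*} [AddCommGroup M]
    [Module R M] (S : Submonoid R)
    (hS : ∀ K : Submodule R M, notPrimeTo K ∩ (S : Set R) = ∅) (N : Submodule R M) :
    radSubmodule (N.localized S) = (radSubmodule N).localized S := by
  exact rad_localized_general _ S _ N fun K ↦ Set.subset_eq_empty
    (Set.inter_subset_inter_left _ (notPrimeTo_subset_notPrimeTo_map_subtype K)) (hS _)
end
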